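/- (Minkowski-type theorem, sufficiency.) Let p : Sⁿ → ℝ be a positive bounded function such that whenever x, y, y₁, …, y_k ∈ Sⁿ and α₁, …, α_k ≥ 0 with Σᵢαᵢ > 0 satisfy x − y = Σ_{i=1}^{k} αᵢ(x − yᵢ) with the vectors x − y₁, …, x − y_k linearly independent, one has p(y) ≤ Σ_{i=1}^{k} αᵢ p(yᵢ). Then B := {X ∈ ℝ^{n+1} : ‖X‖ − ⟨X,y⟩ ≤ p(y) for all y ∈ Sⁿ} is compact with the origin in its interior, R = ∂B is a nondegenerate convex reflector whose focal function equals p (i.e., sup_{X∈B}(‖X‖ − ⟨X,y⟩) = p(y) for every y ∈ Sⁿ), and R is the unique nondegenerate convex reflector with focal function p. -/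

import Mathlib

open scoped InnerProductSpace ENNReal
open Metric Set

noncomputable section

/-- Euclidean space `ℝ^{n+1}`. -/
abbrev E (n : ℕ) : Type := EuclideanSpace ℝ (Fin (n + 1))

/-- The unit sphere `Sⁿ` centered at the origin in `ℝ^{n+1}`. -/
def sph (n : ℕ) : Set (E n) := Metric.sphere (0 : E n) 1

/-- `B` is the convex body of a nondegenerate convex reflector: `B` is the intersection of the
solid confocal paraboloids `{X : ‖X‖ - ⟪X,y⟫ ≤ p̃ y}` for some `p̃ : Sⁿ → (0,∞]`
(encoded via `ENNReal`), `B` is compact and the origin is an interior point of `B`.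
The reflector itself is `R = frontier B`. -/
def IsReflectorBody (n : ℕ) (B : Set (E n)) : Prop :=
  IsCompact B ∧ (0 : E n) ∈ interior B ∧
    ∃ pt : E n → ℝ≥0∞, (∀ y ∈ sph n, 0 < pt y) ∧
      B = {X : E n | ∀ y ∈ sph n, ENNReal.ofReal (‖X‖ - ⟪X, y⟫_ℝ) ≤ pt y}

/-- The focal function `p(y) = sup_{X ∈ B} (‖X‖ - ⟪X, y⟫)` of the reflector `∂B`. -/
def focal (n : ℕ) (B : Set (E n)) (y : E n) : ℝ :=
  sSup ((fun X => ‖X‖ - ⟪X, y⟫_ℝ) '' B)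

/-- The radial function `ρ(x) = sup {λ ≥ 0 : λ x ∈ B}`. -/
def radial (n : ℕ) (B : Set (E n)) (x : E n) : ℝ :=
  sSup {l : ℝ | 0 ≤ l ∧ l • x ∈ B}

/-- The support function `h(U) = sup_{X ∈ B} ⟪X, U⟫`. -/
def suppFn (n : ℕ) (B : Set (E n)) (U : E n) : ℝ :=
  sSup ((fun X => ⟪X, U⟫_ℝ) '' B)

/-- The extended focal function `P(Y) = sup_{X ∈ B} (‖X‖‖Y‖ - ⟪X, Y⟫)` on all of `ℝ^{n+1}`. -/
def extFocal (n : ℕ) (B : Set (E n)) (Y : E n) : ℝ :=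
  sSup ((fun X => ‖X‖ * ‖Y‖ - ⟪X, Y⟫_ℝ) '' B)

/-- The directrix `D(R) = {X - ‖X‖y : X ∈ R, y ∈ Sⁿ, ‖X‖ - ⟪X,y⟫ = p(y)}` of the
reflector `R = frontier B`. -/
def directrix (n : ℕ) (B : Set (E n)) : Set (E n) :=
  {Z : E n | ∃ X ∈ frontier B, ∃ y ∈ sph n,
    ‖X‖ - ⟪X, y⟫_ℝ = focal n B y ∧ Z = X - ‖X‖ • y}

/-!
Truncate the family of paraboloids to a finite set of axes, and let `X₀` maximize `‖X‖ - ⟪X, y₀⟫`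
over the truncated body, with radial direction `x = X₀ / ‖X₀‖`. The gradient of `‖X‖ - ⟪X, y⟫` at
`X₀` is `x - y`, so the first order condition at the maximum, together with the theorems of
Hahn–Banach and Carathéodory, writes `x - y₀` as a positive combination of linearly independent
vectors `x - yᵢ` whose constraints are active at `X₀`. Pairing this identity with `X₀` turns the
Minkowski-type inequality into `p y₀ ≤ ‖X₀‖ - ⟪X₀, y₀⟫`. Compactness then produces a point of the
full body at which the value `p y₀` is attained.

Attainment makes `p` lower semicontinuous, hence bounded below by a positive constant on the
compact sphere, which puts the origin in the interior. Uniqueness holds because an intersection of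
confocal solid paraboloids is also the intersection of the ones given by its focal function.
-/

open Filter Topology

section ConicCombinations

theorem linearIndependent_of_affineIndependent_of_map_eq_one {R M ι : Type*} [Ring R]
    [AddCommGroup M] [Module R M] {z : ι → M} (φ : M →ₗ[R] R) (hz : AffineIndependent R z)
    (hφ : ∀ i, φ (z i) = 1) : LinearIndependent R z := by
  rw [linearIndependent_iff']
  intro s c hc
  have sum_coeff : ∑ i ∈ s, c i = 0 := by
    simpa only [map_sum, map_smul, hφ, smul_eq_mul, mul_one, map_zero] using congrArg φ hc
  exact hz.eq_zero_of_sum_eq_zero sum_coeff hc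

theorem exists_linearIndependent_pos_sum_of_mem_convexHull {𝕜 V : Type*} [Field 𝕜]
    [LinearOrder 𝕜] [IsStrictOrderedRing 𝕜] [AddCommGroup V] [Module 𝕜 V] {T : Set V} {v₀ : V}
    (φ : V →ₗ[𝕜] 𝕜) (hT : ∀ v ∈ T, 0 < φ v) (hv₀ : 0 < φ v₀)
    (h : (φ v₀)⁻¹ • v₀ ∈ convexHull 𝕜 ((fun v ↦ (φ v)⁻¹ • v) '' T)) :
    ∃ (k : ℕ) (u : Fin k → V) (a : Fin k → 𝕜), (∀ i, u i ∈ T) ∧ (∀ i, 0 < a i) ∧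
      v₀ = ∑ i, a i • u i ∧ LinearIndependent 𝕜 u := by
  obtain ⟨ι, _, z, w, hz, haff, hw, -, hsum⟩ := eq_pos_convex_span_of_mem_convexHull h
  choose u huT huz using fun i ↦ hz (mem_range_self i)
  have map_u_pos (i) : 0 < φ (u i) := hT _ (huT i)
  have map_z (i) : φ (z i) = 1 := by
    rw [← huz, map_smul, smul_eq_mul, inv_mul_cancel₀ (map_u_pos i).ne']
  have u_eq : u = (fun i ↦ Units.mk0 (φ (u i)) (map_u_pos i).ne') • z := by
    ext i
    rw [Pi.smul_apply', Units.smul_mk0, ← huz, smul_inv_smul₀ (map_u_pos i).ne']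
  have hu : LinearIndependent 𝕜 u := u_eq ▸
    (linearIndependent_of_affineIndependent_of_map_eq_one φ haff map_z).units_smul _
  let e := (Fintype.equivFin ι).symm
  refine ⟨_, u ∘ e, fun i ↦ φ v₀ * w (e i) / φ (u (e i)), fun i ↦ huT _,
    fun i ↦ div_pos (mul_pos hv₀ (hw _)) (map_u_pos _), ?_, hu.comp e e.injective⟩
  calc v₀ = φ v₀ • ∑ i, w i • z i := by rw [hsum, smul_inv_smul₀ hv₀.ne']
    _ = ∑ i, (φ v₀ * w i / φ (u i)) • u i := by
        simp only [Finset.smul_sum, smul_smul, ← huz, div_eq_mul_inv, mul_assoc]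
    _ = ∑ i, (φ v₀ * w (e i) / φ (u (e i))) • u (e i) :=
        (e.sum_comp fun i ↦ (φ v₀ * w i / φ (u i)) • u i).symm

theorem inv_smul_mem_convexHull_of_forall_exists_nonneg {V : Type*} [AddCommGroup V]
    [Module ℝ V] [TopologicalSpace V] [IsTopologicalAddGroup V] [ContinuousSMul ℝ V]
    [LocallyConvexSpace ℝ V] [T2Space V] {T : Set V} (hfin : T.Finite) {v₀ : V}
    (φ : StrongDual ℝ V) (hT : ∀ v ∈ T, 0 < φ v) (hv₀ : 0 < φ v₀)
    (h : ∀ ψ : StrongDual ℝ V, 0 < ψ v₀ → ∃ v ∈ T, 0 ≤ ψ v) :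
    (φ v₀)⁻¹ • v₀ ∈ convexHull ℝ ((fun v ↦ (φ v)⁻¹ • v) '' T) := by
  by_contra hmem
  obtain ⟨f, c, hlt, hgt⟩ := geometric_hahn_banach_closed_point (convex_convexHull ℝ _)
    ((hfin.image _).isClosed_convexHull ℝ) hmem
  -- The hyperplane `f = c` meets the slice `φ = 1` inside the kernel of `f - c • φ`.
  obtain ⟨v, hv, hψv⟩ := h (f - c • φ) (by
    rw [map_smul, smul_eq_mul, lt_inv_mul_iff₀ hv₀] at hgt
    simpa [mul_comm c] using hgt)
  have hfv := hlt _ (subset_convexHull ℝ _ (mem_image_of_mem _ hv))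
  rw [map_smul, smul_eq_mul, inv_mul_lt_iff₀ (hT v hv)] at hfv
  simp only [sub_apply, smul_apply, smul_eq_mul] at hψv
  linarith

end ConicCombinations

section FirstOrderConditions

theorem tendsto_add_smul_nhdsGT_zero {V : Type*} [AddCommGroup V] [Module ℝ V]
    [TopologicalSpace V] [ContinuousAdd V] [ContinuousSMul ℝ V] (x d : V) :
    Tendsto (fun t : ℝ ↦ x + t • d) (𝓝[>] 0) (𝓝 x) := by
  have : Continuous fun t : ℝ ↦ x + t • d := by fun_prop
  simpa using (this.tendsto 0).mono_left nhdsWithin_le_nhds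

variable {V : Type*} [NormedAddCommGroup V]

theorem eventually_lt_of_hasLineDerivAt_pos [NormedSpace ℝ V] {f : V → ℝ} {f' : ℝ} {x d : V}
    (hf : HasLineDerivAt ℝ f f' x d) (hf' : 0 < f') :
    ∀ᶠ t in 𝓝[>] (0 : ℝ), f x < f (x + t • d) := by
  filter_upwards [hf.tendsto_slope_zero_right.eventually_const_lt hf', self_mem_nhdsWithin]
    with t hslope (ht : 0 < t)
  exact sub_pos.1 (pos_of_mul_pos_right hslope (inv_pos.2 ht).le)

theorem exists_active_fderiv_nonneg_of_isLocalMaxOn [NormedSpace ℝ V] {ι : Type*} {s : Set ι}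
    (hs : s.Finite) {f : V → ℝ} {f' : StrongDual ℝ V} {g : ι → V → ℝ} {g' : ι → StrongDual ℝ V}
    {c : ι → ℝ} {x d : V} (hx : ∀ i ∈ s, g i x ≤ c i)
    (hmax : IsLocalMaxOn f {z | ∀ i ∈ s, g i z ≤ c i} x) (hf : HasFDerivAt f f' x)
    (hg : ∀ i ∈ s, HasFDerivAt (g i) (g' i) x) (hd : 0 < f' d) :
    ∃ i ∈ s, g i x = c i ∧ 0 ≤ g' i d := by
  by_contra! hdescent
  have line_tendsto := tendsto_add_smul_nhdsGT_zero x d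
  have feasible : ∀ᶠ t in 𝓝[>] (0 : ℝ), ∀ i ∈ s, g i (x + t • d) ≤ c i := by
    rw [eventually_all_finite hs]
    intro i hi
    rcases (hx i hi).lt_or_eq with hinactive | hactive
    · exact (((hg i hi).continuousAt.tendsto.comp line_tendsto).eventually_lt_const hinactive).mono
        fun _ ↦ le_of_lt
    · have decreasing := eventually_lt_of_hasLineDerivAt_pos ((hg i hi).neg.hasLineDerivAt d)
        (neg_pos.2 (hdescent i hi hactive))
      exact decreasing.mono fun t ht ↦ hactive ▸ (neg_lt_neg_iff.1 ht).le
  have not_ascending := line_tendsto.eventually (eventually_nhdsWithin_iff.1 hmax)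
  obtain ⟨t, hfeasible, hle, hlt⟩ := (feasible.and (not_ascending.and
    (eventually_lt_of_hasLineDerivAt_pos (hf.hasLineDerivAt d) hd))).exists
  exact (hle hfeasible).not_gt hlt

theorem hasFDerivAt_norm_of_ne_zero [InnerProductSpace ℝ V] {x : V} (hx : x ≠ 0) :
    HasFDerivAt (fun z : V ↦ ‖z‖) (innerSL ℝ (‖x‖⁻¹ • x)) x := by
  have h := (hasStrictFDerivAt_norm_sq x).hasFDerivAt.sqrt (by simpa using hx)
  simp only [Real.sqrt_sq (norm_nonneg _)] at h
  convert h using 1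
  ext z
  simp only [map_smul, smul_apply, coe_innerSL_apply, smul_eq_mul, one_div, mul_inv_rev,
    nsmul_eq_mul, Nat.cast_ofNat]
  field_simp

end FirstOrderConditions

section ConfocalBodies

variable {V : Type*} [NormedAddCommGroup V] [InnerProductSpace ℝ V]

/-- The focal parameter of the paraboloid of revolution with focus `0` and axis `y` through `X`. -/
def focalParam (y X : V) : ℝ := ‖X‖ - ⟪X, y⟫_ℝ

/-- The intersection of the solid confocal paraboloids with axes `y ∈ A` and focal parameters
`p y`. The set of axes is arbitrary, so that the paraboloids can be restricted to finitely many. -/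
def confocalBody (A : Set V) (p : V → ℝ) : Set V := {X | ∀ y ∈ A, focalParam y X ≤ p y}

theorem continuous_focalParam_left (X : V) : Continuous fun y ↦ focalParam y X := by
  unfold focalParam
  fun_prop

theorem continuous_focalParam (y : V) : Continuous (focalParam y) := by
  unfold focalParam
  fun_prop

theorem ne_zero_of_focalParam_pos {y X : V} (h : 0 < focalParam y X) : X ≠ 0 := by
  rintro rfl
  simp [focalParam] at h

theorem hasFDerivAt_focalParam (y : V) {X : V} (hX : X ≠ 0) :
    HasFDerivAt (focalParam y) (innerSL ℝ (‖X‖⁻¹ • X - y)) X := by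
  have h := (hasFDerivAt_norm_of_ne_zero hX).sub (innerSL ℝ y).hasFDerivAt
  rw [map_sub]
  exact h.congr_of_eventuallyEq (.of_forall fun Z ↦ by simp [focalParam, real_inner_comm])

theorem inner_radial_sub (y X : V) : ⟪X, ‖X‖⁻¹ • X - y⟫_ℝ = focalParam y X := by
  rw [inner_sub_right, real_inner_smul_right, real_inner_self_eq_norm_mul_norm, focalParam,
    ← mul_assoc, inv_mul_mul_self]

theorem focalParam_add_focalParam_neg (y X : V) :
    focalParam y X + focalParam (-y) X = 2 * ‖X‖ := by
  rw [focalParam, focalParam, inner_neg_right]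
  ring

theorem focalParam_le_two_mul_norm {y : V} (hy : ‖y‖ = 1) (X : V) :
    focalParam y X ≤ 2 * ‖X‖ := by
  have := real_inner_le_norm X (-y)
  rw [inner_neg_right, norm_neg, hy, mul_one] at this
  rw [focalParam]
  linarith

theorem exists_focalParam_pos {K : Set V} (hK : K ∈ 𝓝 0) {y : V} (hy : y ≠ 0) :
    ∃ X ∈ K, 0 < focalParam y X := by
  obtain ⟨t, htK, ht : 0 < t⟩ :=
    (((tendsto_add_smul_nhdsGT_zero 0 (-y)).eventually hK).and self_mem_nhdsWithin).exists
  refine ⟨t • -y, by rwa [← zero_add (t • -y)], ?_⟩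
  have hinner : 0 < t * ⟪y, y⟫_ℝ := mul_pos ht (real_inner_self_pos.2 hy)
  rw [focalParam, real_inner_smul_left, inner_neg_left]
  linarith [norm_nonneg (t • -y)]

variable {A : Set V} {p q : V → ℝ}

theorem confocalBody_congr (h : EqOn p q A) : confocalBody A p = confocalBody A q :=
  Set.ext fun X ↦ forall₂_congr fun y hy ↦ by rw [h hy]

theorem isClosed_confocalBody (A : Set V) (p : V → ℝ) : IsClosed (confocalBody A p) := by
  simp only [confocalBody, ofPred_forall]
  exact isClosed_biInter fun y _ ↦ isClosed_le (continuous_focalParam y) continuous_const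

theorem isCompact_confocalBody [ProperSpace V] {e : V} (he : e ∈ A) (he' : -e ∈ A) (p : V → ℝ) :
    IsCompact (confocalBody A p) := by
  refine (isCompact_closedBall 0 ((p e + p (-e)) / 2)).of_isClosed_subset
    (isClosed_confocalBody A p) fun X hX ↦ ?_
  rw [mem_closedBall_zero_iff]
  linarith [focalParam_add_focalParam_neg e X, hX e he, hX (-e) he']

theorem confocalBody_mem_nhds_zero (hA : A ⊆ sphere 0 1) {c : ℝ} (hc : 0 < c)
    (hp : ∀ y ∈ A, c ≤ p y) : confocalBody A p ∈ 𝓝 0 := by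
  filter_upwards [closedBall_mem_nhds 0 (half_pos hc)] with X hX y hy
  rw [mem_closedBall_zero_iff] at hX
  linarith [focalParam_le_two_mul_norm (mem_sphere_zero_iff_norm.1 (hA hy)) X, hp y hy]

theorem lowerSemicontinuousOn_of_isGreatest_focalParam {B : Set V}
    (h : ∀ y ∈ A, IsGreatest (focalParam y '' B) (p y)) : LowerSemicontinuousOn p A := by
  intro y hy c hc
  obtain ⟨X, hX, hXy⟩ := (h y hy).1
  rw [← hXy] at hc
  filter_upwards [(continuous_focalParam_left X).continuousWithinAt.eventually_const_lt hc,
    self_mem_nhdsWithin] with z hcz hz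
  exact hcz.trans_le ((h z hz).2 (mem_image_of_mem _ hX))

end ConfocalBodies

section Minkowski

variable {V : Type*} [NormedAddCommGroup V] [InnerProductSpace ℝ V] {p : V → ℝ}

/-- The Minkowski-type inequalities for a function `p` on the unit sphere: `p y ≤ ∑ i, aᵢ * p yᵢ`
whenever `x - y` is a nonnegative, not identically vanishing combination of linearly independent
vectors `x - yᵢ`. -/
def SatisfiesMinkowskiIneq (p : V → ℝ) : Prop :=
  ∀ x y : V, x ∈ sphere (0 : V) 1 → y ∈ sphere (0 : V) 1 →
    ∀ (k : ℕ) (ys : Fin k → V) (a : Fin k → ℝ),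
      (∀ i, ys i ∈ sphere (0 : V) 1) → (∀ i, 0 ≤ a i) → 0 < ∑ i, a i →
      x - y = ∑ i, a i • (x - ys i) →
      LinearIndependent ℝ (fun i ↦ x - ys i) →
      p y ≤ ∑ i, a i * p (ys i)

theorem exists_active_pos_sum_of_isMaxOn [CompleteSpace V] {A : Set V} (hA : A.Finite)
    (hpos : ∀ y ∈ A, 0 < p y) {y₀ X : V} (hX : X ∈ confocalBody A p)
    (hmax : IsMaxOn (focalParam y₀) (confocalBody A p) X) (hXpos : 0 < focalParam y₀ X) :
    ∃ (k : ℕ) (ys : Fin k → V) (a : Fin k → ℝ),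
      (∀ i, ys i ∈ A ∧ focalParam (ys i) X = p (ys i)) ∧ (∀ i, 0 < a i) ∧
      ‖X‖⁻¹ • X - y₀ = ∑ i, a i • (‖X‖⁻¹ • X - ys i) ∧
      LinearIndependent ℝ (fun i ↦ ‖X‖⁻¹ • X - ys i) := by
  have hX₀ : X ≠ 0 := ne_zero_of_focalParam_pos hXpos
  let active : Set V := {y ∈ A | focalParam y X = p y}
  have hactive : active.Finite := hA.subset (sep_subset _ _)
  have active_pos : ∀ v ∈ (fun y ↦ ‖X‖⁻¹ • X - y) '' active, 0 < innerSL ℝ X v := by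
    rintro _ ⟨y, ⟨hyA, hy⟩, rfl⟩
    rw [innerSL_apply_apply, inner_radial_sub, hy]
    exact hpos y hyA
  have radial_pos : 0 < innerSL ℝ X (‖X‖⁻¹ • X - y₀) := by
    rwa [innerSL_apply_apply, inner_radial_sub]
  have first_order (ψ : StrongDual ℝ V) (hψ : 0 < ψ (‖X‖⁻¹ • X - y₀)) :
      ∃ v ∈ (fun y ↦ ‖X‖⁻¹ • X - y) '' active, 0 ≤ ψ v := by
    obtain ⟨d, rfl⟩ := (InnerProductSpace.toDual ℝ V).surjective ψ
    obtain ⟨y, hyA, hy, hyd⟩ := exists_active_fderiv_nonneg_of_isLocalMaxOn (d := d) hA hX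
      hmax.localize (hasFDerivAt_focalParam y₀ hX₀) (fun y _ ↦ hasFDerivAt_focalParam y hX₀)
      (by rwa [innerSL_apply_apply, real_inner_comm])
    exact ⟨_, ⟨y, ⟨hyA, hy⟩, rfl⟩, by rwa [innerSL_apply_apply, real_inner_comm] at hyd⟩
  obtain ⟨k, u, a, hu, ha, hsum, hind⟩ := exists_linearIndependent_pos_sum_of_mem_convexHull
    (innerSL ℝ X).toLinearMap active_pos radial_pos
    (inv_smul_mem_convexHull_of_forall_exists_nonneg (hactive.image _) _ active_pos radial_pos
      first_order)
  choose ys hys hysu using hu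
  obtain rfl : (fun i ↦ ‖X‖⁻¹ • X - ys i) = u := funext hysu
  exact ⟨k, ys, a, hys, ha, hsum, hind⟩

namespace SatisfiesMinkowskiIneq

theorem le_focalParam_of_isMaxOn [CompleteSpace V] (hineq : SatisfiesMinkowskiIneq p)
    {A : Set V} (hA : A.Finite) (hAsphere : A ⊆ sphere 0 1) (hpos : ∀ y ∈ A, 0 < p y) {y₀ X : V}
    (hy₀ : y₀ ∈ sphere 0 1) (hX : X ∈ confocalBody A p)
    (hmax : IsMaxOn (focalParam y₀) (confocalBody A p) X) (hXpos : 0 < focalParam y₀ X) :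
    p y₀ ≤ focalParam y₀ X := by
  obtain ⟨k, ys, a, hys, ha, hsum, hind⟩ :=
    exists_active_pos_sum_of_isMaxOn hA hpos hX hmax hXpos
  have hx_sub : ‖X‖⁻¹ • X - y₀ ≠ 0 := by
    intro h
    rw [← inner_radial_sub, h, inner_zero_right] at hXpos
    exact hXpos.false
  have hx : ‖X‖⁻¹ • X ∈ sphere 0 1 :=
    mem_sphere_zero_iff_norm.2 (norm_smul_inv_norm (𝕜 := ℝ) (ne_zero_of_focalParam_pos hXpos))
  have ha_sum : 0 < ∑ i, a i := Finset.sum_pos (fun i _ ↦ ha i)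
    (Finset.nonempty_of_sum_ne_zero (hsum ▸ hx_sub))
  calc p y₀ ≤ ∑ i, a i * p (ys i) :=
        hineq _ y₀ hx hy₀ k ys a (fun i ↦ hAsphere (hys i).1) (fun i ↦ (ha i).le) ha_sum hsum hind
    _ = ∑ i, a i * ⟪X, ‖X‖⁻¹ • X - ys i⟫_ℝ := by simp only [inner_radial_sub, (hys _).2]
    _ = ⟪X, ‖X‖⁻¹ • X - y₀⟫_ℝ := by simp only [hsum, inner_sum, real_inner_smul_right]
    _ = focalParam y₀ X := inner_radial_sub y₀ X

variable [FiniteDimensional ℝ V]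

theorem exists_le_focalParam_of_finite (hineq : SatisfiesMinkowskiIneq p)
    (hpos : ∀ y ∈ sphere (0 : V) 1, 0 < p y) {A : Set V} (hA : A.Finite) (hAsphere : A ⊆ sphere 0 1)
    {e : V} (he : e ∈ A) (he' : -e ∈ A) {y₀ : V} (hy₀ : y₀ ∈ sphere 0 1) :
    ∃ X ∈ confocalBody A p, p y₀ ≤ focalParam y₀ X := by
  obtain ⟨m, hm, hmin⟩ := exists_min_image A p hA ⟨e, he⟩
  have hnhds : confocalBody A p ∈ 𝓝 0 :=
    confocalBody_mem_nhds_zero hAsphere (hpos m (hAsphere hm)) hmin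
  obtain ⟨X, hX, hmax⟩ := (isCompact_confocalBody he he' p).exists_isMaxOn
    ⟨0, mem_of_mem_nhds hnhds⟩ (continuous_focalParam y₀).continuousOn
  obtain ⟨Z, hZ, hZpos⟩ := exists_focalParam_pos hnhds (ne_zero_of_mem_unit_sphere ⟨y₀, hy₀⟩)
  exact ⟨X, hX, hineq.le_focalParam_of_isMaxOn hA hAsphere (fun y hy ↦ hpos y (hAsphere hy)) hy₀ hX
    hmax (hZpos.trans_le (hmax hZ))⟩

theorem isGreatest_focalParam (hineq : SatisfiesMinkowskiIneq p)
    (hpos : ∀ y ∈ sphere (0 : V) 1, 0 < p y) {y₀ : V} (hy₀ : y₀ ∈ sphere 0 1) :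
    IsGreatest (focalParam y₀ '' confocalBody (sphere 0 1) p) (p y₀) := by
  have hy₀' : -y₀ ∈ sphere (0 : V) 1 := by simpa using hy₀
  have hcompact : IsCompact (confocalBody {y₀, -y₀} p ∩ {X | p y₀ ≤ focalParam y₀ X}) :=
    (isCompact_confocalBody (e := y₀) (by simp) (by simp) p).inter_right
      (isClosed_le continuous_const (continuous_focalParam y₀))
  obtain ⟨X, ⟨-, hX⟩, hXbody⟩ := hcompact.inter_iInter_nonempty
    (fun y : sphere (0 : V) 1 ↦ {X : V | focalParam (y : V) X ≤ p y})
    (fun y ↦ isClosed_le (continuous_focalParam (y : V)) continuous_const) fun s ↦ by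
      obtain ⟨X, hX, hle⟩ := hineq.exists_le_focalParam_of_finite hpos (e := y₀)
        (A := {y₀, -y₀} ∪ (↑) '' (s : Set (sphere (0 : V) 1)))
        ((toFinite _).union (s.finite_toSet.image _))
        (union_subset (pair_subset hy₀ hy₀') (Subtype.coe_image_subset _ _))
        (by simp) (by simp) hy₀
      exact ⟨X, ⟨fun y hy ↦ hX y (.inl hy), hle⟩,
        mem_iInter₂.2 fun y hy ↦ hX y (.inr (mem_image_of_mem _ hy))⟩
  rw [mem_iInter] at hXbody
  exact ⟨⟨X, fun y hy ↦ hXbody ⟨y, hy⟩, (hXbody ⟨y₀, hy₀⟩).antisymm hX⟩,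
    forall_mem_image.2 fun Z hZ ↦ hZ y₀ hy₀⟩

theorem zero_mem_interior_confocalBody [Nontrivial V] (hineq : SatisfiesMinkowskiIneq p)
    (hpos : ∀ y ∈ sphere (0 : V) 1, 0 < p y) :
    (0 : V) ∈ interior (confocalBody (sphere 0 1) p) := by
  have hlsc : LowerSemicontinuousOn p (sphere 0 1) :=
    lowerSemicontinuousOn_of_isGreatest_focalParam fun y hy ↦ hineq.isGreatest_focalParam hpos hy
  obtain ⟨m, hm, hmin⟩ := hlsc.exists_isMinOn (NormedSpace.sphere_nonempty.2 zero_le_one)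
    (isCompact_sphere 0 1)
  exact mem_interior_iff_mem_nhds.2 (confocalBody_mem_nhds_zero subset_rfl (hpos m hm) hmin)

end SatisfiesMinkowskiIneq

end Minkowski

section Reflectors

variable {V : Type*} [NormedAddCommGroup V] [InnerProductSpace ℝ V]

/-- The focal function `y ↦ sup_{X ∈ B} (‖X‖ - ⟪X, y⟫)` of a body `B` in an inner product space. It
has the junk value `0` where this supremum is infinite. -/
def focalFunction (B : Set V) (y : V) : ℝ := sSup (focalParam y '' B)

/-- The bodies of nondegenerate convex reflectors in an inner product space: compact intersections
of solid confocal paraboloids with the focus in the interior. The focal parameter `∞` stands for an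
axis without constraint. -/
def IsConvexReflectorBody (B : Set V) : Prop :=
  IsCompact B ∧ (0 : V) ∈ interior B ∧
    ∃ pt : V → ℝ≥0∞, (∀ y ∈ sphere (0 : V) 1, 0 < pt y) ∧
      B = {X | ∀ y ∈ sphere (0 : V) 1, ENNReal.ofReal (focalParam y X) ≤ pt y}

theorem confocalBody_focalFunction_eq {A B : Set V} {pt : V → ℝ≥0∞} (hne : B.Nonempty)
    (hbdd : ∀ y ∈ A, BddAbove (focalParam y '' B))
    (hB : B = {X | ∀ y ∈ A, ENNReal.ofReal (focalParam y X) ≤ pt y}) :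
    confocalBody A (focalFunction B) = B := by
  refine Subset.antisymm (fun X hX ↦ ?_) fun X hX y hy ↦
    le_csSup (hbdd y hy) (mem_image_of_mem _ hX)
  rw [hB]
  intro y hy
  rcases eq_or_ne (pt y) ∞ with hpt | hpt
  · exact hpt ▸ le_top
  · rw [ENNReal.ofReal_le_iff_le_toReal hpt]
    refine (hX y hy).trans (csSup_le (hne.image _) (forall_mem_image.2 fun Z hZ ↦ ?_))
    rw [hB] at hZ
    exact (ENNReal.ofReal_le_iff_le_toReal hpt).1 (hZ y hy)

theorem IsConvexReflectorBody.confocalBody_focalFunction {B : Set V}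
    (hB : IsConvexReflectorBody B) : confocalBody (sphere 0 1) (focalFunction B) = B := by
  obtain ⟨hcompact, hzero, pt, -, hpt⟩ := hB
  exact confocalBody_focalFunction_eq ⟨0, interior_subset hzero⟩
    (fun y _ ↦ (hcompact.image (continuous_focalParam y)).bddAbove) hpt

theorem SatisfiesMinkowskiIneq.isConvexReflectorBody [FiniteDimensional ℝ V] [Nontrivial V]
    {p : V → ℝ} (hineq : SatisfiesMinkowskiIneq p) (hpos : ∀ y ∈ sphere (0 : V) 1, 0 < p y) :
    IsConvexReflectorBody (confocalBody (sphere 0 1) p) := by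
  obtain ⟨e, he⟩ : (sphere (0 : V) 1).Nonempty := NormedSpace.sphere_nonempty.2 zero_le_one
  refine ⟨isCompact_confocalBody he (by simpa using he) p,
    hineq.zero_mem_interior_confocalBody hpos, fun y ↦ ENNReal.ofReal (p y),
    fun y hy ↦ ENNReal.ofReal_pos.2 (hpos y hy), ?_⟩
  exact Set.ext fun X ↦ forall₂_congr fun y hy ↦
    (ENNReal.ofReal_le_ofReal_iff (hpos y hy).le).symm

theorem statement9_general [FiniteDimensional ℝ V] [Nontrivial V] (p : V → ℝ)
    (hpos : ∀ y ∈ sphere (0 : V) 1, 0 < p y) (hineq : SatisfiesMinkowskiIneq p) :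
    IsConvexReflectorBody (confocalBody (sphere 0 1) p) ∧
    (∀ y ∈ sphere (0 : V) 1, focalFunction (confocalBody (sphere 0 1) p) y = p y) ∧
    (∀ B' : Set V, IsConvexReflectorBody B' →
      (∀ y ∈ sphere (0 : V) 1, focalFunction B' y = p y) → B' = confocalBody (sphere 0 1) p) :=
  ⟨hineq.isConvexReflectorBody hpos,
    fun _ hy ↦ (hineq.isGreatest_focalParam hpos hy).csSup_eq,
    fun _ hB' hfocal ↦ hB'.confocalBody_focalFunction.symm.trans (confocalBody_congr hfocal)⟩

end Reflectors

/-- Minkowski-type theorem, sufficiency: If `p` is positive and bounded on `Sⁿ`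
and satisfies the Minkowski-type inequalities, then
`B = {X : ‖X‖ - ⟪X,y⟫ ≤ p(y) for all y ∈ Sⁿ}` is compact with the origin in its interior,
`R = ∂B` is a nondegenerate convex reflector with focal function `p`, and it is the unique
such reflector. -/
theorem statement9 (n : ℕ) (hn : 1 ≤ n) (p : E n → ℝ)
    (hpos : ∀ y ∈ sph n, 0 < p y)
    (hbdd : ∃ M : ℝ, ∀ y ∈ sph n, p y ≤ M)
    (hineq : ∀ x y : E n, x ∈ sph n → y ∈ sph n →
      ∀ (k : ℕ) (ys : Fin k → E n) (a : Fin k → ℝ),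
        (∀ i, ys i ∈ sph n) → (∀ i, 0 ≤ a i) → 0 < ∑ i, a i →
        x - y = ∑ i, a i • (x - ys i) →
        LinearIndependent ℝ (fun i => x - ys i) →
        p y ≤ ∑ i, a i * p (ys i))
    (B : Set (E n)) (hBdef : B = {X : E n | ∀ y ∈ sph n, ‖X‖ - ⟪X, y⟫_ℝ ≤ p y}) :
    IsCompact B ∧ (0 : E n) ∈ interior B ∧ IsReflectorBody n B ∧
    (∀ y ∈ sph n, focal n B y = p y) ∧
    (∀ B' : Set (E n), IsReflectorBody n B' →
      (∀ y ∈ sph n, focal n B' y = p y) → B' = B) := by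
  obtain ⟨hbody, hfocal, hunique⟩ := statement9_general p hpos hineq
  exact hBdef ▸ ⟨hbody.1, hbody.2.1, hbody, hfocal, hunique⟩
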